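/- arXiv:1608.08746 — 7 statements merged into one kernel-verified Lean document; each statement's English description precedes it below -/
import Mathlib

section
/- Let V be a real vector space, let B = {e^1,…,e^h} be a finite linearly independent subset of V, and let U be a linear subspace of the dual space V* having property (E) with respect to the cone C(B). Then C(B) ∩ U^⊥ = C(B ∩ U^⊥), where U^⊥ = {w ∈ V : ⟨u, w⟩ = 0 for all u ∈ U}, and where C(B ∩ U^⊥) = {0} if B ∩ U^⊥ is empty. -/
/-- The cone of nonnegative real linear combinations of the family `e`. -/
def coneFam {V : Type*} [AddCommGroup V] [Module ℝ V] {h : ℕ} (e : Fin h → V) : Set V :=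
  {v | ∃ c : Fin h → ℝ, (∀ j, 0 ≤ c j) ∧ v = ∑ j, c j • e j}

/-- A subspace `U` of the dual of `V` has property (E) with respect to the cone `C(B)` of the
family `e` if `U` admits a basis `u_1, …, u_r` with `⟨u_i, e^j⟩ ≥ 0` for all `i, j`. -/
def HasPropertyE {V : Type*} [AddCommGroup V] [Module ℝ V]
    (U : Submodule ℝ (Module.Dual ℝ V)) {h : ℕ} (e : Fin h → V) : Prop :=
  ∃ (r : ℕ) (u : Fin r → Module.Dual ℝ V),
    LinearIndependent ℝ u ∧ Submodule.span ℝ (Set.range u) = U ∧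
      ∀ i j, 0 ≤ u i (e j)

/-- Lemma 3.1: if `U` has property (E) with respect to `C(B)`, then
`C(B) ∩ U^⊥ = C(B ∩ U^⊥)`. -/
theorem stmt0 {V : Type*} [AddCommGroup V] [Module ℝ V] {h : ℕ} (e : Fin h → V)
    (hind : LinearIndependent ℝ e)
    (U : Submodule ℝ (Module.Dual ℝ V)) (hE : HasPropertyE U e) :
    coneFam e ∩ {w : V | ∀ u ∈ U, u w = 0} =
      {v | ∃ c : Fin h → ℝ, (∀ j, 0 ≤ c j) ∧
        (∀ j, e j ∉ {w : V | ∀ u ∈ U, u w = 0} → c j = 0) ∧ v = ∑ j, c j • e j} := by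
  obtain ⟨r, u, -, hspan, hpos⟩ := hE
  ext v
  simp only [Set.mem_inter_iff, Set.mem_setOf_eq, coneFam]
  constructor
  · rintro ⟨⟨c, hc, rfl⟩, hv⟩
    refine ⟨c, hc, ?_, rfl⟩
    intro j hj
    by_contra hne
    apply hj
    have key : ∀ i, u i (e j) = 0 := by
      intro i
      have h1 := hv (u i) (hspan ▸ Submodule.subset_span ⟨i, rfl⟩)
      simp only [map_sum, map_smul, smul_eq_mul] at h1
      have h2 := (Finset.sum_eq_zero_iff_of_nonneg
        (fun k _ => mul_nonneg (hc k) (hpos i k))).1 h1 j (Finset.mem_univ j)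
      exact (mul_eq_zero.1 h2).resolve_left hne
    intro w hw
    rw [← hspan] at hw
    induction hw using Submodule.span_induction with
    | mem x hx => obtain ⟨i, rfl⟩ := hx; exact key i
    | zero => simp
    | add x y _ _ hx hy => simp [hx, hy]
    | smul a x _ hx => simp [hx]
  · rintro ⟨c, hc, h0, rfl⟩
    refine ⟨⟨c, hc, rfl⟩, ?_⟩
    intro w hw
    simp only [map_sum, map_smul, smul_eq_mul]
    refine Finset.sum_eq_zero fun j _ => ?_
    by_cases hj : ∀ u ∈ U, u (e j) = 0
    · rw [hj w hw, mul_zero]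
    · rw [h0 j hj, zero_mul]
end

section
/- Let Δ be a smooth fan in ℝ^n with respect to the lattice ℤ^n, let Γ be a subgroup of Hom(ℤ^n, ℤ), and suppose the subspace U = Γ ⊗ ℝ ⊆ Hom(ℝ^n, ℝ) has property (E) with respect to every cone of Δ. Set U^⊥ = {v ∈ ℝ^n : ⟨u, v⟩ = 0 for all u ∈ U}. Then: (1) for every cone C ∈ Δ, the relative interior of C is either entirely contained in U^⊥ or disjoint from U^⊥; (2) the collection Δ_H of all cones of Δ that are contained in U^⊥ is a smooth fan in U^⊥ with respect to the lattice ℤ^n ∩ U^⊥; in particular the integral generators of each cone of Δ_H span a direct summand of the lattice ℤ^n ∩ U^⊥. -/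
/-- The canonical embedding of `ℤ^n` into `ℝ^n`. -/
noncomputable def toR {n : ℕ} (x : Fin n → ℤ) : Fin n → ℝ := fun i => (x i : ℝ)

/-- The cone of nonnegative real linear combinations of the finite set `s` of integer
vectors. -/
noncomputable def coneOf {n : ℕ} (s : Finset (Fin n → ℤ)) : Set (Fin n → ℝ) :=
  {v | ∃ c : (Fin n → ℤ) → ℝ, (∀ x, 0 ≤ c x) ∧ v = ∑ x ∈ s, c x • toR x}

/-- The relative interior of the cone generated by `s`: strictly positive combinations of the
generators. -/
noncomputable def relIntOf {n : ℕ} (s : Finset (Fin n → ℤ)) : Set (Fin n → ℝ) :=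
  {v | ∃ c : (Fin n → ℤ) → ℝ, (∀ x ∈ s, 0 < c x) ∧ v = ∑ x ∈ s, c x • toR x}

/-- A smooth fan in `ℝ^n` with respect to the lattice `ℤ^n`: a finite collection of cones,
each recorded by its finite set of integral generators, such that the generators of each cone
are linearly independent and span a direct summand of `ℤ^n`, the collection is closed under
taking faces (subsets of the generators), and the intersection of any two cones of the fan is
a face of each of them. -/
def IsSmoothFan {n : ℕ} (Δ : Finset (Finset (Fin n → ℤ))) : Prop :=
  (∀ s ∈ Δ, LinearIndependent ℝ (fun x : s => toR (x : Fin n → ℤ))) ∧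
  (∀ s ∈ Δ, ∃ P : Submodule ℤ (Fin n → ℤ),
      IsCompl (Submodule.span ℤ (s : Set (Fin n → ℤ))) P) ∧
  (∀ s ∈ Δ, ∀ t ⊆ s, t ∈ Δ) ∧
  (∀ s ∈ Δ, ∀ t ∈ Δ,
      (∃ u ⊆ s, coneOf s ∩ coneOf t = coneOf u) ∧
      (∃ u ⊆ t, coneOf s ∩ coneOf t = coneOf u))

/-- A subspace `U ⊆ Hom(ℝ^n, ℝ) = ℝ^n` has property (E) with respect to the cone generated by
`s`: `U` admits a basis `u_1, …, u_r` pairing nonnegatively with every generator of `s`. -/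
def SubspacePropE {n : ℕ} (U : Submodule ℝ (Fin n → ℝ)) (s : Finset (Fin n → ℤ)) : Prop :=
  ∃ (r : ℕ) (u : Fin r → Fin n → ℝ), LinearIndependent ℝ u ∧
    Submodule.span ℝ (Set.range u) = U ∧ ∀ i, ∀ x ∈ s, 0 ≤ ∑ k, u i k * (x k : ℝ)

/-- A smooth fan inside the subspace cut out by `U^⊥`, with respect to the sublattice
`L = ℤ^n ∩ U^⊥`: a finite collection of cones whose generators lie in `L`, are linearly
independent and span a direct summand of `L`, closed under faces, and such that the
intersection of two of its cones is a face of each of them. -/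
def IsSmoothFanIn {n : ℕ} (L : Set (Fin n → ℤ)) (Δ' : Set (Finset (Fin n → ℤ))) : Prop :=
  Δ'.Finite ∧
  (∀ s ∈ Δ', (s : Set (Fin n → ℤ)) ⊆ L) ∧
  (∀ s ∈ Δ', LinearIndependent ℝ (fun x : s => toR (x : Fin n → ℤ))) ∧
  (∀ s ∈ Δ', ∃ P : Submodule ℤ (Fin n → ℤ), (P : Set (Fin n → ℤ)) ⊆ L ∧
      Submodule.span ℤ (s : Set (Fin n → ℤ)) ⊓ P = ⊥ ∧
      ∀ x, x ∈ L ↔ x ∈ Submodule.span ℤ (s : Set (Fin n → ℤ)) ⊔ P) ∧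
  (∀ s ∈ Δ', ∀ t ⊆ s, t ∈ Δ') ∧
  (∀ s ∈ Δ', ∀ t ∈ Δ',
      (∃ u ∈ Δ', u ⊆ s ∧ coneOf s ∩ coneOf t = coneOf u) ∧
      (∃ u ∈ Δ', u ⊆ t ∧ coneOf s ∩ coneOf t = coneOf u))

theorem coneOf_mono {n : ℕ} {s t : Finset (Fin n → ℤ)} (h : t ⊆ s) : coneOf t ⊆ coneOf s := by
  classical
  rintro v ⟨c, hc, rfl⟩
  refine ⟨fun x => if x ∈ t then c x else 0, fun x => ?_, ?_⟩
  · dsimp only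
    split_ifs
    · exact hc x
    · exact le_rfl
  · rw [← Finset.sum_subset h]
    · exact Finset.sum_congr rfl fun x hx => by simp [hx]
    · intro x _ hx
      simp [hx]

theorem toR_mem_coneOf {n : ℕ} {s : Finset (Fin n → ℤ)} {x : Fin n → ℤ} (hx : x ∈ s) :
    toR x ∈ coneOf s := by
  classical
  refine ⟨fun y => if y = x then 1 else 0, fun y => ?_, ?_⟩
  · dsimp only
    split_ifs <;> norm_num
  · simp [hx]

/-- The annihilator of `U` as a submodule. -/
def perpSub {n : ℕ} (U : Submodule ℝ (Fin n → ℝ)) : Submodule ℝ (Fin n → ℝ) where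
  carrier := {v | ∀ u ∈ U, ∑ k, u k * v k = 0}
  add_mem' := by
    intro a b ha hb u hu
    simp [mul_add, Finset.sum_add_distrib, ha u hu, hb u hu]
  zero_mem' := by
    intro u _
    simp
  smul_mem' := by
    intro c a ha u hu
    have := ha u hu
    simp only [Pi.smul_apply, smul_eq_mul, mul_left_comm _ c, ← Finset.mul_sum, this, mul_zero]

theorem pair_sum {n : ℕ} (u : Fin n → ℝ) (s : Finset (Fin n → ℤ)) (c : (Fin n → ℤ) → ℝ) :
    ∑ k, u k * (∑ x ∈ s, c x • toR x) k = ∑ x ∈ s, c x * ∑ k, u k * (x k : ℝ) := by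
  simp only [Finset.sum_apply, Pi.smul_apply, smul_eq_mul, Finset.mul_sum, toR]
  rw [Finset.sum_comm]
  exact Finset.sum_congr rfl fun x _ => Finset.sum_congr rfl fun k _ => by ring

/-- The lattice of integer points of the annihilator. -/
def latSub {n : ℕ} (U : Submodule ℝ (Fin n → ℝ)) : Submodule ℤ (Fin n → ℤ) where
  carrier := {x | toR x ∈ perpSub U}
  add_mem' := by
    intro a b ha hb
    have : toR (a + b) = toR a + toR b := by ext; simp [toR]
    simp only [Set.mem_setOf_eq] at *
    rw [this]
    exact add_mem ha hb
  zero_mem' := by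
    have : toR (0 : Fin n → ℤ) = 0 := by ext; simp [toR]
    simp only [Set.mem_setOf_eq]
    rw [this]
    exact zero_mem _
  smul_mem' := by
    intro c a ha
    have : toR (c • a) = (c : ℝ) • toR a := by ext; simp [toR]
    simp only [Set.mem_setOf_eq] at *
    rw [this]
    exact Submodule.smul_mem _ _ ha

/-- Proposition 3.6: if `Δ` is a smooth fan and the real span `U` of a subgroup `Γ` of
`Hom(ℤ^n, ℤ)` has property (E) with respect to every cone of `Δ`, then (1) the relative
interior of every cone of `Δ` is entirely contained in `U^⊥` or disjoint from it, and (2) the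
cones of `Δ` contained in `U^⊥` form a smooth fan in `U^⊥` with respect to the lattice
`ℤ^n ∩ U^⊥`; in particular the generators of each such cone span a direct summand of
`ℤ^n ∩ U^⊥`. -/
theorem stmt6 {n : ℕ} (Δ : Finset (Finset (Fin n → ℤ))) (hΔ : IsSmoothFan Δ)
    (Γ : Submodule ℤ (Fin n → ℤ))
    (U : Submodule ℝ (Fin n → ℝ))
    (hU : U = Submodule.span ℝ (toR '' (Γ : Set (Fin n → ℤ))))
    (hE : ∀ s ∈ Δ, SubspacePropE U s) :
    let perp : Set (Fin n → ℝ) := {v | ∀ u ∈ U, ∑ k, u k * v k = 0}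
    (∀ s ∈ Δ, relIntOf s ⊆ perp ∨ relIntOf s ∩ perp = ∅) ∧
    IsSmoothFanIn {x : Fin n → ℤ | toR x ∈ perp}
      {s : Finset (Fin n → ℤ) | s ∈ Δ ∧ coneOf s ⊆ perp} := by
  intro perp
  obtain ⟨h1, h2, h3, h4⟩ := hΔ
  refine ⟨?_, ?_, ?_, ?_, ?_, ?_, ?_⟩
  · intro s hs
    rcases Set.eq_empty_or_nonempty (relIntOf s ∩ perp) with h | ⟨v, ⟨c, hc, rfl⟩, hv⟩
    · exact Or.inr h
    left
    obtain ⟨r, u, -, hspan, hpos⟩ := hE s hs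
    have key : ∀ x ∈ s, toR x ∈ perpSub U := by
      intro x hx w hw
      rw [← hspan] at hw
      induction hw using Submodule.span_induction with
      | mem w hw =>
        obtain ⟨i, rfl⟩ := hw
        have h0 := hv (u i) (hspan ▸ Submodule.subset_span ⟨i, rfl⟩)
        rw [pair_sum, Finset.sum_eq_zero_iff_of_nonneg
          (fun y hy => mul_nonneg (hc y hy).le (hpos i y hy))] at h0
        exact (mul_eq_zero.1 (h0 x hx)).resolve_left (hc x hx).ne'
      | zero => simp
      | add a b _ _ ha hb => simp [add_mul, Finset.sum_add_distrib, ha, hb]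
      | smul c a _ ha => simp [mul_assoc, ← Finset.mul_sum, ha]
    rintro _ ⟨d, -, rfl⟩
    exact Submodule.sum_mem _ fun x hx => Submodule.smul_mem _ _ (key x hx)
  · exact Δ.finite_toSet.subset fun s hs => hs.1
  · exact fun s hs x hx => hs.2 (toR_mem_coneOf hx)
  · exact fun s hs => h1 s hs.1
  · intro s hs
    obtain ⟨P, hP⟩ := h2 s hs.1
    have hsL : Submodule.span ℤ (s : Set (Fin n → ℤ)) ≤ latSub U :=
      Submodule.span_le.2 fun x hx => hs.2 (toR_mem_coneOf hx)
    refine ⟨P ⊓ latSub U, fun x hx => hx.2, ?_, fun x => ?_⟩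
    · rw [← inf_assoc, hP.inf_eq_bot, bot_inf_eq]
    · rw [← sup_inf_assoc_of_le P hsL, hP.sup_eq_top, top_inf_eq]
      exact Iff.rfl
  · exact fun s hs t ht => ⟨h3 s hs.1 t ht, (coneOf_mono ht).trans hs.2⟩
  · intro s hs t ht
    obtain ⟨⟨a, ha, ha'⟩, ⟨b, hb, hb'⟩⟩ := h4 s hs.1 t ht.1
    exact ⟨⟨a, ⟨h3 s hs.1 a ha, (coneOf_mono ha).trans hs.2⟩, ha, ha'⟩,
      ⟨b, ⟨h3 t ht.1 b hb, (coneOf_mono hb).trans ht.2⟩, hb, hb'⟩⟩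
end

section
/- Let r ≤ n, let A = (m_{i,j}) be an n×r matrix of nonnegative integers of rank r, and let b_1,…,b_r be nonzero complex numbers. For j = 1,…,r define the polynomial p_j = x_1^{m_{1,j}} ⋯ x_n^{m_{n,j}} − b_j in ℂ[x_1,…,x_n]. Then at every point t ∈ ℂ^n with p_1(t) = ⋯ = p_r(t) = 0, the Jacobian matrix ((∂p_j/∂x_i)(t))_{i,j} has rank r. -/
open MvPolynomial

/-- If `A = (m_{i,j})` is an `n × r` matrix of nonnegative integers of rank `r ≤ n` and
`b_1, …, b_r` are nonzero complex numbers, then at every common zero `t` of the polynomials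
`p_j = x_1^{m_{1,j}} ⋯ x_n^{m_{n,j}} − b_j` the Jacobian matrix `(∂p_j/∂x_i)(t)` has
rank `r`. -/
theorem stmt7 {n r : ℕ} (hrn : r ≤ n) (m : Fin n → Fin r → ℕ)
    (hrank : (Matrix.of fun i j => (m i j : ℚ)).rank = r)
    (b : Fin r → ℂ) (hb : ∀ j, b j ≠ 0)
    (p : Fin r → MvPolynomial (Fin n) ℂ)
    (hp : ∀ j, p j = (∏ i, X i ^ m i j) - C (b j))
    (t : Fin n → ℂ) (ht : ∀ j, eval t (p j) = 0) :
    (Matrix.of fun i j => eval t (pderiv i (p j))).rank = r := by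
  classical
  have hmon : ∀ j, (∏ i, X i ^ m i j : MvPolynomial (Fin n) ℂ)
      = monomial (Finsupp.equivFunOnFinite.symm fun i => m i j) 1 := by
    intro j
    rw [monomial_eq, Finsupp.prod_fintype _ _ (by simp)]
    simp
  have hprod : ∀ j, ∏ i, t i ^ m i j = b j := by
    intro j
    have := ht j
    rw [hp j] at this
    simpa [sub_eq_zero] using this
  have hzero : ∀ i, t i = 0 → ∀ j, m i j = 0 := by
    intro i hi j
    by_contra h
    exact hb j (by rw [← hprod j]; exact Finset.prod_eq_zero (Finset.mem_univ i) (by simp [hi, h]))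
  have hpd0 : ∀ i j, m i j = 0 → eval t (pderiv i (p j)) = 0 := by
    intro i j h
    rw [hp j, hmon j]
    simp [pderiv_monomial, h]
  have hpd : ∀ i j, t i * eval t (pderiv i (p j)) = m i j * b j := by
    intro i j
    have h := congrArg (eval t) (X_mul_pderiv_monomial (R := ℂ) (i := i)
      (m := Finsupp.equivFunOnFinite.symm fun i => m i j) (r := 1))
    rw [← hmon j] at h
    rw [hp j, map_sub, pderiv_C, sub_zero]
    simp only [map_mul, eval_X, map_nsmul] at h
    rw [h]
    simp [hprod]
  set s : Fin n → ℂ := fun i => if t i = 0 then 1 else (t i)⁻¹ with hs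
  have hJ : (Matrix.of fun i j => eval t (pderiv i (p j)))
      = Matrix.diagonal s * (Matrix.of fun i j => (m i j : ℂ)) * Matrix.diagonal b := by
    ext i j
    rw [Matrix.mul_diagonal, Matrix.diagonal_mul]
    simp only [Matrix.of_apply, hs]
    split_ifs with h
    · simp [hpd0 i j (hzero i h j), hzero i h j]
    · rw [mul_assoc, ← hpd i j, inv_mul_cancel_left₀ h]
  rw [hJ, Matrix.rank_mul_eq_left_of_det_ne_zero, Matrix.rank_mul_eq_right_of_det_ne_zero]
  · have hli : LinearIndependent ℚ (Matrix.of fun i j => (m i j : ℚ)).col := by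
      rw [linearIndependent_iff_card_eq_finrank_span, Set.finrank,
        ← Matrix.rank_eq_finrank_span_cols, hrank, Fintype.card_fin]
    have hli2 : LinearIndependent ℂ (Matrix.of fun i j => (m i j : ℂ)).col := by
      have h := (linearIndependent_algebraMap_comp_iff (S := ℂ)).2 hli
      have he : (Matrix.of fun i j => (m i j : ℂ)).col
          = fun j => algebraMap ℚ ℂ ∘ (Matrix.of fun i j => (m i j : ℚ)).col j := by
        ext j i
        simp [Matrix.col]
      rw [he]
      exact h
    rw [linearIndependent_iff_card_eq_finrank_span, Set.finrank,
      ← Matrix.rank_eq_finrank_span_cols, Fintype.card_fin] at hli2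
    exact hli2.symm
  · rw [Matrix.det_diagonal]
    refine Finset.prod_ne_zero_iff.2 fun i _ => ?_
    simp only [hs]
    split_ifs with h
    · exact one_ne_zero
    · exact inv_ne_zero h
  · rw [Matrix.det_diagonal]
    exact Finset.prod_ne_zero_iff.2 fun j _ => hb j
end

section
/- Let A = (m_{i,j}) be an n×r matrix of nonnegative integers, let b_1,…,b_r be complex numbers, and for j = 1,…,r define p_j = x_1^{m_{1,j}} ⋯ x_n^{m_{n,j}} − b_j in ℂ[x_1,…,x_n]. Let 1 ≤ i_1 < ⋯ < i_r ≤ n be a choice of r row indices and set M_i = Σ_{j=1}^r m_{i,j} for each i. Then the following identity of polynomials holds: (∏_{ℓ=1}^r x_{i_ℓ}) · det((∂p_j/∂x_{i_ℓ})_{ℓ,j}) = det((m_{i_ℓ,j})_{ℓ,j}) · ∏_{i=1}^n x_i^{M_i}. -/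
open MvPolynomial

theorem key_aux {n : ℕ} (e : Fin n → ℕ) (k : Fin n) :
    (X k : MvPolynomial (Fin n) ℂ) * pderiv k (∏ i, X i ^ e i) =
      C (e k : ℂ) * ∏ i, X i ^ e i := by
  have h : (∏ i, X i ^ e i : MvPolynomial (Fin n) ℂ) =
      monomial (Finsupp.equivFunOnFinite.symm e) 1 := by
    rw [monomial_eq, Finsupp.prod_fintype _ _ (fun i => by simp)]
    simp
  rw [h, X_mul_pderiv_monomial]
  simp [nsmul_eq_mul]

/-- The Jacobian determinant identity: for `p_j = x_1^{m_{1,j}} ⋯ x_n^{m_{n,j}} − b_j` and row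
indices `i_1 < ⋯ < i_r`, with `M_i = ∑_j m_{i,j}`, one has
`(∏_ℓ x_{i_ℓ}) · det(∂p_j/∂x_{i_ℓ}) = det((m_{i_ℓ,j})) · ∏_i x_i^{M_i}`. -/
theorem stmt8 {n r : ℕ} (m : Fin n → Fin r → ℕ) (b : Fin r → ℂ)
    (p : Fin r → MvPolynomial (Fin n) ℂ)
    (hp : ∀ j, p j = (∏ i, X i ^ m i j) - C (b j))
    (idx : Fin r → Fin n) (hidx : StrictMono idx)
    (M : Fin n → ℕ) (hM : ∀ i, M i = ∑ j, m i j) :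
    (∏ ℓ, X (idx ℓ)) * Matrix.det (Matrix.of fun ℓ j => pderiv (idx ℓ) (p j)) =
      C (Matrix.det (Matrix.of fun ℓ j => ((m (idx ℓ) j : ℂ)))) * ∏ i, X i ^ M i := by
  rw [← Matrix.det_mul_column]
  have h2 : (∏ i, X i ^ M i : MvPolynomial (Fin n) ℂ) = ∏ j, ∏ i, X i ^ m i j := by
    rw [Finset.prod_comm]
    refine Finset.prod_congr rfl fun i _ => ?_
    rw [hM, Finset.prod_pow_eq_pow_sum]
  rw [h2, RingHom.map_det, mul_comm, ← Matrix.det_mul_row]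
  congr 1
  ext1 ℓ j
  simp only [Matrix.of_apply, RingHom.mapMatrix_apply, Matrix.map_apply, hp]
  rw [map_sub, pderiv_C, sub_zero, key_aux, mul_comm]
end

section
/- Let Δ be a smooth fan in ℝ^n with respect to the lattice ℤ^n and let Ξ ⊂ Hom(ℤ^n, ℤ) be a finite set. Then there exists a fan Δ̄ obtained from Δ by a finite sequence of elementary stellar subdivisions of two-dimensional cones such that: (1) Δ̄ is a smooth fan; (2) Δ̄ is a subdivision of Δ, i.e. every cone of Δ̄ is contained in some cone of Δ and the union of the cones of Δ̄ equals the union of the cones of Δ; (3) every χ ∈ Ξ has property (E) with respect to every cone of Δ̄, i.e. for every cone C of Δ̄ either ⟨χ, v⟩ ≥ 0 for all v ∈ C or ⟨χ, v⟩ ≤ 0 for all v ∈ C. -/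
/-- The elementary stellar subdivision `_CΔ` of `Δ` along the two dimensional cone
`C = C(e^1, e^2)`: every cone `C(e^1, e^2, w^1, …, w^t)` containing `C` is replaced by the two
cones `C(e^1, e^1+e^2, w^1, …, w^t)` and `C(e^1+e^2, e^2, w^1, …, w^t)`, and all faces of
these new cones are adjoined. -/
def stellar {n : ℕ} (Δ : Finset (Finset (Fin n → ℤ))) (e1 e2 : Fin n → ℤ) :
    Finset (Finset (Fin n → ℤ)) :=
  Δ.filter (fun s => ¬ ({e1, e2} : Finset (Fin n → ℤ)) ⊆ s) ∪
    (Δ.filter (fun s => ({e1, e2} : Finset (Fin n → ℤ)) ⊆ s)).biUnion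
      (fun s => (insert (e1 + e2) (s.erase e2)).powerset ∪
        (insert (e1 + e2) (s.erase e1)).powerset)

/-- One elementary stellar subdivision step: `Δ'` is obtained from `Δ` by subdividing along a
two dimensional cone `C(e^1, e^2)` of `Δ`. -/
def StellarStep {n : ℕ} (Δ Δ' : Finset (Finset (Fin n → ℤ))) : Prop :=
  ∃ e1 e2 : Fin n → ℤ, e1 ≠ e2 ∧ ({e1, e2} : Finset (Fin n → ℤ)) ∈ Δ ∧
    Δ' = stellar Δ e1 e2

/-- Real evaluation of a formal combination. -/
noncomputable def LL (n : ℕ) : ((Fin n → ℤ) →₀ ℝ) →ₗ[ℝ] (Fin n → ℝ) :=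
  Finsupp.linearCombination ℝ (toR (n := n))

theorem mem_coneOf {n : ℕ} {s : Finset (Fin n → ℤ)} {v : Fin n → ℝ} :
    v ∈ coneOf s ↔ ∃ c : (Fin n → ℤ) →₀ ℝ, (∀ x, 0 ≤ c x) ∧ (∀ x, x ∉ s → c x = 0) ∧
      LL n c = v := by
  classical
  constructor
  · rintro ⟨c, hc, rfl⟩
    refine ⟨Finsupp.onFinset s (fun x => if x ∈ s then c x else 0) (by
      intro a ha; by_contra h; simp [h] at ha), ?_, ?_, ?_⟩
    · intro x
      simp only [Finsupp.onFinset_apply]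
      split_ifs
      · exact hc x
      · exact le_rfl
    · intro x hx
      simp [hx]
    · rw [LL, Finsupp.linearCombination_apply, Finsupp.onFinset_sum _ (by simp)]
      apply Finset.sum_congr rfl
      intro x hx
      simp [hx]
  · rintro ⟨c, hc, hs, rfl⟩
    refine ⟨c, hc, ?_⟩
    rw [LL, Finsupp.linearCombination_apply, Finsupp.sum_of_support_subset]
    · intro x hx
      by_contra h
      exact (Finsupp.mem_support_iff.1 hx) (hs x h)
    · simp

theorem toR_add {n : ℕ} (x y : Fin n → ℤ) : toR (x + y) = toR x + toR y := by
  ext i; simp [toR]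

theorem LL_single {n : ℕ} (x : Fin n → ℤ) (a : ℝ) : LL n (Finsupp.single x a) = a • toR x := by
  simp [LL]

/-- Linear independence over a set in terms of formal combinations. -/
theorem li_inj {n : ℕ} {s : Finset (Fin n → ℤ)}
    (h : LinearIndependent ℝ (fun x : s => toR (x : Fin n → ℤ)))
    {c d : (Fin n → ℤ) →₀ ℝ} (hc : ∀ x, x ∉ s → c x = 0) (hd : ∀ x, x ∉ s → d x = 0)
    (he : LL n c = LL n d) : c = d := by
  have h' : LinearIndepOn ℝ (toR (n := n)) (s : Set (Fin n → ℤ)) := h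
  rw [linearIndepOn_iff] at h'
  rw [← sub_eq_zero]
  apply h'
  · rw [Finsupp.mem_supported]
    intro x hx
    by_contra hh
    exact (Finsupp.mem_support_iff.1 hx) (by
      rw [Finsupp.sub_apply, hc x hh, hd x hh, sub_self])
  · change LL n (c - d) = 0
    rw [map_sub, he, sub_self]

/-- Uniqueness of representation across the fan. -/
def UU {n : ℕ} (Δ : Finset (Finset (Fin n → ℤ))) : Prop :=
  ∀ s ∈ Δ, ∀ t ∈ Δ, ∀ c d : (Fin n → ℤ) →₀ ℝ, (∀ x, 0 ≤ c x) → (∀ x, 0 ≤ d x) →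
    (∀ x, x ∉ s → c x = 0) → (∀ x, x ∉ t → d x = 0) → LL n c = LL n d → c = d

theorem UU.li {n : ℕ} {Δ : Finset (Finset (Fin n → ℤ))} (h : UU Δ) {s} (hs : s ∈ Δ) :
    LinearIndependent ℝ (fun x : s => toR (x : Fin n → ℤ)) := by
  have : LinearIndepOn ℝ (toR (n := n)) (s : Set (Fin n → ℤ)) := by
    rw [linearIndepOn_iff]
    intro c hc h0
    rw [Finsupp.mem_supported] at hc
    have hc' : ∀ x, x ∉ s → c x = 0 := by
      intro x hx
      by_contra hh
      exact hx (hc (Finsupp.mem_support_iff.2 hh))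
    let p : (Fin n → ℤ) →₀ ℝ := c.mapRange (fun a => max a 0) (by simp)
    let q : (Fin n → ℤ) →₀ ℝ := c.mapRange (fun a => max (-a) 0) (by simp)
    have hpq : c = p - q := by
      ext x
      simp only [p, q, Finsupp.sub_apply, Finsupp.mapRange_apply]
      rcases le_total (c x) 0 with h | h
      · rw [max_eq_right h, max_eq_left (by linarith)]; ring
      · rw [max_eq_left h, max_eq_right (by linarith)]; ring
    have := h s hs s hs p q (fun x => by simp [p]) (fun x => by simp [q])
      (fun x hx => by simp [p, hc' x hx]) (fun x hx => by simp [q, hc' x hx]) (by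
        have : LL n c = 0 := h0
        rw [hpq, map_sub, sub_eq_zero] at this
        exact this)
    rw [hpq, this, sub_self]
  exact this

/-- `s` spans a direct summand. -/
def Smd {n : ℕ} (s : Finset (Fin n → ℤ)) : Prop :=
  ∃ P : Submodule ℤ (Fin n → ℤ), IsCompl (Submodule.span ℤ (s : Set (Fin n → ℤ))) P

theorem li_int {n : ℕ} {s : Finset (Fin n → ℤ)}
    (h : LinearIndependent ℝ (fun x : s => toR (x : Fin n → ℤ))) :
    LinearIndependent ℤ (fun x : s => (x : Fin n → ℤ)) := by
  have h2 : LinearIndependent ℤ (fun x : s => toR (x : Fin n → ℤ)) :=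
    h.restrict_scalars (by
      intro a b hab
      simpa using hab)
  let F : (Fin n → ℤ) →ₗ[ℤ] (Fin n → ℝ) :=
    { toFun := toR
      map_add' := toR_add
      map_smul' := by intro m x; ext i; simp [toR] }
  exact LinearIndependent.of_comp F h2

theorem Smd.mono {n : ℕ} {s t : Finset (Fin n → ℤ)}
    (h : LinearIndependent ℝ (fun x : s => toR (x : Fin n → ℤ))) (hs : Smd s) (hts : t ⊆ s) :
    Smd t := by
  classical
  obtain ⟨P, hP⟩ := hs
  have hli : LinearIndepOn ℤ id (s : Set (Fin n → ℤ)) := li_int h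
  have hu : (s : Set (Fin n → ℤ)) =
      (t : Set (Fin n → ℤ)) ∪ ((s \ t : Finset (Fin n → ℤ)) : Set (Fin n → ℤ)) := by
    rw [← Finset.coe_union, Finset.union_sdiff_of_subset hts]
  have hd : Disjoint (Submodule.span ℤ (t : Set (Fin n → ℤ)))
      (Submodule.span ℤ ((s \ t : Finset (Fin n → ℤ)) : Set (Fin n → ℤ))) := by
    have := (linearIndepOn_union_iff (s := (t : Set (Fin n → ℤ)))
      (t := ((s \ t : Finset (Fin n → ℤ)) : Set (Fin n → ℤ))) (R := ℤ) (v := id)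
      (by exact_mod_cast Finset.disjoint_sdiff)).1 (hu ▸ hli)
    simpa using this.2.2
  rw [hu, Submodule.span_union] at hP
  refine ⟨Submodule.span ℤ ((s \ t : Finset (Fin n → ℤ)) : Set (Fin n → ℤ)) ⊔ P, ?_, ?_⟩
  · exact hd.disjoint_sup_right_of_disjoint_sup_left hP.disjoint
  · rw [codisjoint_iff, ← sup_assoc]
    exact hP.codisjoint.eq_top

theorem prim_mul {n : ℕ} {x y : Fin n → ℤ} (hx : Smd {x}) (hx0 : x ≠ 0) {a : ℝ}
    (h : toR y = a • toR x) : ∃ k : ℤ, y = k • x := by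
  obtain ⟨P, hP⟩ := hx
  rw [Finset.coe_singleton] at hP
  have : y ∈ Submodule.span ℤ {x} ⊔ P := by rw [hP.sup_eq_top]; trivial
  obtain ⟨z, hz, p, hp, rfl⟩ := Submodule.mem_sup.1 this
  obtain ⟨k, rfl⟩ := Submodule.mem_span_singleton.1 hz
  obtain ⟨i, hi⟩ := Function.ne_iff.1 hx0
  have key : x i • p = p i • x := by
    ext j
    have h1 := congrFun h i
    have h2 := congrFun h j
    simp only [toR, Pi.add_apply, Pi.smul_apply, smul_eq_mul, Int.cast_add, Int.cast_mul] at h1 h2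
    have : (x i : ℝ) * p j = p i * x j := by
      have h1' : (p i : ℝ) = (a - k) * x i := by linarith
      have h2' : (p j : ℝ) = (a - k) * x j := by linarith
      rw [h1', h2']; ring
    simp only [Pi.smul_apply, smul_eq_mul]
    exact_mod_cast this
  have h0 : x i • p = 0 := by
    have hd := Submodule.disjoint_def.1 hP.disjoint
    apply hd
    · rw [key]; exact Submodule.smul_mem _ _ (Submodule.mem_span_singleton_self x)
    · exact P.smul_mem _ hp
  have : p = 0 := (smul_eq_zero.1 h0).resolve_left hi
  exact ⟨k, by rw [this, add_zero]⟩

theorem prim_eq {n : ℕ} {x y : Fin n → ℤ} (hx : Smd {x}) (hy : Smd {y}) (hx0 : x ≠ 0)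
    (hy0 : y ≠ 0) {a : ℝ} (ha : 0 < a) (h : toR y = a • toR x) : x = y := by
  obtain ⟨k, hk⟩ := prim_mul hx hx0 h
  obtain ⟨l, hl⟩ := prim_mul hy hy0 (a := a⁻¹) (y := x) (by
    rw [h, smul_smul, inv_mul_cancel₀ ha.ne', one_smul])
  obtain ⟨i, hi⟩ := Function.ne_iff.1 hx0
  have hi : x i ≠ 0 := hi
  have hki : y i = k * x i := by rw [hk]; simp
  have hli : x i = l * y i := by conv_lhs => rw [hl]; simp
  have hlk : l * k = 1 := by
    have : (l * k) * x i = 1 * x i := by rw [mul_assoc, ← hki, ← hli, one_mul]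
    exact mul_right_cancel₀ hi this
  have hka : (k : ℝ) = a := by
    have := congrFun h i
    simp only [toR, Pi.smul_apply, smul_eq_mul, hki, Int.cast_mul] at this
    exact mul_right_cancel₀ (by exact_mod_cast hi) this
  have hk0 : 0 < k := by
    rw [← hka] at ha; exact_mod_cast ha
  have : k = 1 := Int.eq_one_of_mul_eq_one_left hk0.le hlk
  rw [hk, this, one_smul]

theorem toR_zero {n : ℕ} : toR (0 : Fin n → ℤ) = 0 := by ext i; simp [toR]

theorem cone_sub {n : ℕ} {A B : Finset (Fin n → ℤ)}
    (hA : LinearIndependent ℝ (fun x : A => toR (x : Fin n → ℤ)))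
    (hB : LinearIndependent ℝ (fun x : B => toR (x : Fin n → ℤ)))
    (sA : Smd A) (sB : Smd B) (h : coneOf A = coneOf B) : A ⊆ B := by
  classical
  intro x hx
  have gen : ∀ (C : Finset (Fin n → ℤ)) y, y ∈ C → toR y ∈ coneOf C := by
    intro C y hy
    refine mem_coneOf.2 ⟨Finsupp.single y 1, ?_, ?_, by simp [LL_single]⟩
    · intro z; rw [Finsupp.single_apply]; split_ifs <;> norm_num
    · intro z hz; rw [Finsupp.single_apply, if_neg]; rintro rfl; exact hz hy
  obtain ⟨c, c0, cs, hc⟩ := mem_coneOf.1 (h ▸ gen A x hx)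
  have : ∀ y ∈ B, ∃ d : (Fin n → ℤ) →₀ ℝ, (∀ x, 0 ≤ d x) ∧ (∀ x, x ∉ A → d x = 0) ∧
      LL n d = toR y := fun y hy => mem_coneOf.1 (h ▸ gen B y hy)
  choose! D D0 DA DL using this
  have e1 : Finsupp.single x 1 = ∑ y ∈ B, c y • D y := by
    apply li_inj hA
    · intro z hz; rw [Finsupp.single_apply, if_neg]; rintro rfl; exact hz hx
    · intro z hz
      rw [Finsupp.finsetSum_apply]
      apply Finset.sum_eq_zero
      intro y hy
      simp [DA y hy z hz]
    · rw [LL_single, one_smul, map_sum, ← hc]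
      have : LL n c = ∑ y ∈ B, c y • toR y := by
        rw [LL, Finsupp.linearCombination_apply, Finsupp.sum_of_support_subset]
        · intro x hx
          by_contra h
          exact (Finsupp.mem_support_iff.1 hx) (cs x h)
        · simp
      rw [this]
      apply Finset.sum_congr rfl
      intro y hy
      rw [map_smul, DL y hy]
  have nzA : toR x ≠ 0 := hA.ne_zero ⟨x, hx⟩
  obtain ⟨y, hcy⟩ : ∃ y, c y ≠ 0 := by
    by_contra! hh
    apply nzA
    rw [← hc, show c = 0 from Finsupp.ext hh, map_zero]
  have hy : y ∈ B := by
    by_contra hh; exact hcy (cs y hh)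
  have hz : ∀ z, z ≠ x → D y z = 0 := by
    intro z hz
    have := DFunLike.congr_fun e1 z
    rw [Finsupp.single_apply, if_neg (Ne.symm hz), Finsupp.finsetSum_apply] at this
    have := (Finset.sum_eq_zero_iff_of_nonneg (by
      intro y hy
      exact mul_nonneg (c0 y) (D0 y hy z))).1 this.symm y hy
    simpa [hcy] using this
  have hD : D y = Finsupp.single x (D y x) := by
    ext z
    rw [Finsupp.single_apply]
    split_ifs with hh
    · rw [hh]
    · exact hz z (Ne.symm hh)
  have hyx : toR y = D y x • toR x := by
    rw [← LL_single, ← hD, DL y hy]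
  have nzB : toR y ≠ 0 := hB.ne_zero ⟨y, hy⟩
  have hpos : 0 < D y x := by
    refine lt_of_le_of_ne (D0 y hy x) ?_
    intro h0
    apply nzB; rw [hyx, ← h0, zero_smul]
  have := prim_eq (sA.mono hA (Finset.singleton_subset_iff.2 hx))
    (sB.mono hB (Finset.singleton_subset_iff.2 hy))
    (by rintro rfl; exact nzA toR_zero) (by rintro rfl; exact nzB toR_zero) hpos hyx
  rw [this]; exact hy

/-- Working version of smooth fans. -/
def Good {n : ℕ} (Δ : Finset (Finset (Fin n → ℤ))) : Prop :=
  UU Δ ∧ (∀ s ∈ Δ, Smd s) ∧ (∀ s ∈ Δ, ∀ t ⊆ s, t ∈ Δ)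

theorem good_of_smooth {n : ℕ} {Δ : Finset (Finset (Fin n → ℤ))} (h : IsSmoothFan Δ) :
    Good Δ := by
  obtain ⟨h1, h2, h3, h4⟩ := h
  refine ⟨?_, h2, h3⟩
  intro s hs t ht c d c0 d0 cs dt hcd
  obtain ⟨⟨u, hu, e⟩, ⟨u', hu', e'⟩⟩ := h4 s hs t ht
  have hus := h3 s hs u hu
  have hut := h3 t ht u' hu'
  have := cone_sub (h1 u hus) (h1 u' hut) (h2 u hus) (h2 u' hut) (e.symm.trans e')
  have hv : LL n c ∈ coneOf u := by
    rw [← e]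
    exact ⟨mem_coneOf.2 ⟨c, c0, cs, rfl⟩, mem_coneOf.2 ⟨d, d0, dt, hcd.symm⟩⟩
  obtain ⟨w, w0, wu, hw⟩ := mem_coneOf.1 hv
  have a1 : w = c := li_inj (h1 s hs) (fun x hx => wu x fun hh => hx (hu hh)) cs hw
  have a2 : w = d := li_inj (h1 t ht) (fun x hx => wu x fun hh => hx (hu' (this hh))) dt
    (hw.trans hcd)
  rw [← a1, a2]

theorem Good.smooth {n : ℕ} {Δ : Finset (Finset (Fin n → ℤ))} (h : Good Δ) :
    IsSmoothFan Δ := by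
  classical
  obtain ⟨h1, h2, h3⟩ := h
  refine ⟨fun s hs => h1.li hs, h2, h3, ?_⟩
  intro s hs t ht
  have : coneOf s ∩ coneOf t = coneOf (s ∩ t) := by
    ext v
    constructor
    · rintro ⟨a, b⟩
      obtain ⟨c, c0, cs, hc⟩ := mem_coneOf.1 a
      obtain ⟨d, d0, ds, hd⟩ := mem_coneOf.1 b
      have := h1 s hs t ht c d c0 d0 cs ds (hc.trans hd.symm)
      refine mem_coneOf.2 ⟨c, c0, ?_, hc⟩
      intro x hx
      by_cases hxs : x ∈ s
      · rw [this]; exact ds x fun hh => hx (Finset.mem_inter.2 ⟨hxs, hh⟩)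
      · exact cs x hxs
    · intro hv
      obtain ⟨c, c0, cs, hc⟩ := mem_coneOf.1 hv
      exact ⟨mem_coneOf.2 ⟨c, c0, fun x hx => cs x fun hh => hx (Finset.mem_inter.1 hh).1, hc⟩,
        mem_coneOf.2 ⟨c, c0, fun x hx => cs x fun hh => hx (Finset.mem_inter.1 hh).2, hc⟩⟩
  exact ⟨⟨_, Finset.inter_subset_left, this⟩, ⟨_, Finset.inter_subset_right, this⟩⟩

theorem Good.ne_zero {n : ℕ} {Δ : Finset (Finset (Fin n → ℤ))} (h : Good Δ) {s} (hs : s ∈ Δ)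
    {x} (hx : x ∈ s) : x ≠ 0 := by
  rintro rfl
  exact (h.1.li hs).ne_zero ⟨_, hx⟩ toR_zero

theorem Good.new {n : ℕ} {Δ : Finset (Finset (Fin n → ℤ))} (h : Good Δ) {e1 e2 : Fin n → ℤ}
    (hne : e1 ≠ e2) (he : {e1, e2} ∈ Δ) : e1 + e2 ≠ e1 ∧ e1 + e2 ≠ e2 ∧
      ∀ s ∈ Δ, e1 + e2 ∉ s := by
  classical
  have z1 : e1 ≠ 0 := h.ne_zero he (by simp)
  have z2 : e2 ≠ 0 := h.ne_zero he (by simp)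
  have n1 : e1 + e2 ≠ e1 := by simpa using z2
  have n2 : e1 + e2 ≠ e2 := by simpa using z1
  refine ⟨n1, n2, ?_⟩
  intro s hs hes
  have := h.1 s hs _ he (Finsupp.single (e1 + e2) 1) (Finsupp.single e1 1 + Finsupp.single e2 1)
    (by intro z; rw [Finsupp.single_apply]; split_ifs <;> norm_num)
    (by intro z; rw [Finsupp.add_apply, Finsupp.single_apply, Finsupp.single_apply]
        split_ifs <;> norm_num)
    (by intro z hz; rw [Finsupp.single_apply, if_neg]; rintro rfl; exact hz hes)
    (by intro z hz
        simp only [Finset.mem_insert, Finset.mem_singleton, not_or] at hz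
        simp [Finsupp.single_apply, Ne.symm hz.1, Ne.symm hz.2])
    (by simp [LL_single, toR_add])
  have := DFunLike.congr_fun this (e1 + e2)
  simp [-left_eq_add, -right_eq_add, -add_eq_left, -add_eq_right,
    Finsupp.single_apply, Ne.symm n1, Ne.symm n2] at this

theorem Good.mem_stellar {n : ℕ} {Δ : Finset (Finset (Fin n → ℤ))} (h : Good Δ)
    {e1 e2 : Fin n → ℤ} (hne : e1 ≠ e2) (he : {e1, e2} ∈ Δ) {σ : Finset (Fin n → ℤ)} :
    σ ∈ stellar Δ e1 e2 ↔ ¬ (e1 ∈ σ ∧ e2 ∈ σ) ∧ ((e1 + e2 ∉ σ ∧ σ ∈ Δ) ∨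
      (e1 + e2 ∈ σ ∧ insert e1 (insert e2 (σ.erase (e1 + e2))) ∈ Δ)) := by
  obtain ⟨n1, n2, hn⟩ := h.new hne he
  have h3 := h.2.2
  simp only [stellar, Finset.mem_union, Finset.mem_filter, Finset.mem_biUnion,
    Finset.mem_powerset, Finset.insert_subset_iff, Finset.singleton_subset_iff]
  generalize e1 + e2 = e at *
  constructor
  · rintro (⟨a, b⟩ | ⟨s, ⟨hs, h1, h2⟩, hh⟩)
    · exact ⟨b, Or.inl ⟨hn _ a, a⟩⟩
    · have hns := hn s hs
      refine ⟨?_, ?_⟩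
      · rintro ⟨p, q⟩
        rcases hh with hh | hh
        · have := hh q
          simp [Ne.symm n2] at this
        · have := hh p
          simp [Ne.symm n1] at this
      · have hsub : ∀ x ∈ σ, x ≠ e → x ∈ s := by
          intro x hx hxe
          rcases hh with hh | hh
          · have := hh hx
            simp [hxe] at this; exact this.2
          · have := hh hx
            simp [hxe] at this; exact this.2
        by_cases heσ : e ∈ σ
        · right
          refine ⟨heσ, h3 s hs _ ?_⟩
          intro x hx
          simp only [Finset.mem_insert, Finset.mem_erase] at hx
          rcases hx with rfl | rfl | hx
          · exact h1
          · exact h2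
          · exact hsub x hx.2 hx.1
        · left
          exact ⟨heσ, h3 s hs _ fun x hx => hsub x hx (by rintro rfl; exact heσ hx)⟩
  · rintro ⟨hnot, ⟨_, b⟩ | ⟨a, b⟩⟩
    · exact Or.inl ⟨b, hnot⟩
    · right
      refine ⟨_, ⟨b, by simp, by simp⟩, ?_⟩
      by_cases hh : e2 ∈ σ
      · right
        intro x hx
        have : x ≠ e1 := by rintro rfl; exact hnot ⟨hx, hh⟩
        by_cases hxe : x = e <;> simp [*]
      · left
        intro x hx
        have : x ≠ e2 := by rintro rfl; exact hh hx
        by_cases hxe : x = e <;> simp [*]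

/-- Push a combination down to the coarser fan. -/
noncomputable def push {n : ℕ} (e1 e2 : Fin n → ℤ) (c : (Fin n → ℤ) →₀ ℝ) :
    (Fin n → ℤ) →₀ ℝ :=
  c + c (e1 + e2) • (Finsupp.single e1 1 + Finsupp.single e2 1 - Finsupp.single (e1 + e2) 1)

theorem LL_rel {n : ℕ} (e1 e2 : Fin n → ℤ) :
    LL n (Finsupp.single e1 1 + Finsupp.single e2 1 - Finsupp.single (e1 + e2) 1) = 0 := by
  simp [LL_single, toR_add]

theorem LL_push {n : ℕ} (e1 e2 : Fin n → ℤ) (c : (Fin n → ℤ) →₀ ℝ) :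
    LL n (push e1 e2 c) = LL n c := by
  rw [push, map_add, map_smul, LL_rel, smul_zero, add_zero]

theorem rel_apply {n : ℕ} {e1 e2 : Fin n → ℤ} (hne : e1 ≠ e2) (n1 : e1 + e2 ≠ e1)
    (n2 : e1 + e2 ≠ e2) (x : Fin n → ℤ) :
    (Finsupp.single e1 1 + Finsupp.single e2 1 - Finsupp.single (e1 + e2) 1 :
      (Fin n → ℤ) →₀ ℝ) x = if x = e1 ∨ x = e2 then 1 else if x = e1 + e2 then -1 else 0 := by
  simp only [Finsupp.sub_apply, Finsupp.add_apply, Finsupp.single_apply]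
  generalize e1 + e2 = e at *
  grind

theorem push_apply {n : ℕ} {e1 e2 : Fin n → ℤ} (hne : e1 ≠ e2) (n1 : e1 + e2 ≠ e1)
    (n2 : e1 + e2 ≠ e2) (c : (Fin n → ℤ) →₀ ℝ) (x : Fin n → ℤ) :
    push e1 e2 c x = if x = e1 ∨ x = e2 then c x + c (e1 + e2) else
      if x = e1 + e2 then 0 else c x := by
  rw [push, Finsupp.add_apply, Finsupp.smul_apply, rel_apply hne n1 n2]
  split_ifs with h1 h2
  · simp
  · simp [h2]
  · simp

theorem Good.push {n : ℕ} {Δ : Finset (Finset (Fin n → ℤ))} (h : Good Δ)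
    {e1 e2 : Fin n → ℤ} (hne : e1 ≠ e2) (he : {e1, e2} ∈ Δ) {σ : Finset (Fin n → ℤ)}
    (hσ : σ ∈ stellar Δ e1 e2) : ∃ s ∈ Δ, ∀ c : (Fin n → ℤ) →₀ ℝ, (∀ x, 0 ≤ c x) →
      (∀ x, x ∉ σ → c x = 0) → (∀ x, 0 ≤ push e1 e2 c x) ∧
        (∀ x, x ∉ s → push e1 e2 c x = 0) := by
  obtain ⟨n1, n2, hn⟩ := h.new hne he
  have pa := push_apply hne n1 n2
  have nn : ∀ c : (Fin n → ℤ) →₀ ℝ, (∀ x, 0 ≤ c x) → ∀ x, 0 ≤ _root_.push e1 e2 c x := by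
    intro c c0 x
    rw [pa]
    have := c0 x
    have := c0 (e1 + e2)
    split_ifs <;> linarith
  obtain ⟨-, ⟨a, b⟩ | ⟨a, b⟩⟩ := (h.mem_stellar hne he).1 hσ
  · refine ⟨σ, b, fun c c0 cs => ⟨nn c c0, fun x hx => ?_⟩⟩
    rw [pa, cs x hx, cs _ a]
    simp
  · refine ⟨_, b, fun c c0 cs => ⟨nn c c0, fun x hx => ?_⟩⟩
    rw [pa]
    simp only [Finset.mem_insert, Finset.mem_erase, not_or, not_and] at hx
    obtain ⟨x1, x2, x3⟩ := hx
    rw [if_neg (by tauto)]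
    split_ifs with hh
    · rfl
    · exact cs x (x3 hh)

theorem Good.stellar_UU {n : ℕ} {Δ : Finset (Finset (Fin n → ℤ))} (h : Good Δ)
    {e1 e2 : Fin n → ℤ} (hne : e1 ≠ e2) (he : {e1, e2} ∈ Δ) : UU (stellar Δ e1 e2) := by
  obtain ⟨n1, n2, hn⟩ := h.new hne he
  have pa := push_apply hne n1 n2
  intro σ hσ τ hτ c d c0 d0 cσ dτ hcd
  obtain ⟨s, hs, Hs⟩ := h.push hne he hσ
  obtain ⟨t, ht, Ht⟩ := h.push hne he hτ
  obtain ⟨p1, p2⟩ := Hs c c0 cσ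
  obtain ⟨q1, q2⟩ := Ht d d0 dτ
  have key := h.1 s hs t ht _ _ p1 q1 p2 q2 (by rw [LL_push, LL_push, hcd])
  have key : ∀ x, _ := fun x => DFunLike.congr_fun key x
  have k1 := key e1
  have k2 := key e2
  rw [pa, pa, if_pos (by simp), if_pos (by simp)] at k1 k2
  have m1 := ((h.mem_stellar hne he).1 hσ).1
  have m2 := ((h.mem_stellar hne he).1 hτ).1
  have z1 : c e1 = 0 ∨ c e2 = 0 := by
    by_contra! hh
    exact m1 ⟨by_contra fun a => hh.1 (cσ _ a), by_contra fun a => hh.2 (cσ _ a)⟩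
  have z2 : d e1 = 0 ∨ d e2 = 0 := by
    by_contra! hh
    exact m2 ⟨by_contra fun a => hh.1 (dτ _ a), by_contra fun a => hh.2 (dτ _ a)⟩
  have a1 := c0 e1
  have a2 := c0 e2
  have a3 := d0 e1
  have a4 := d0 e2
  have ke : c (e1 + e2) = d (e1 + e2) := by
    rcases z1 with z1 | z1 <;> rcases z2 with z2 | z2 <;> linarith
  ext x
  by_cases x1 : x = e1
  · rw [x1]; linarith
  by_cases x2 : x = e2
  · rw [x2]; linarith
  by_cases x3 : x = e1 + e2
  · rw [x3, ke]
  have := key x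
  rw [pa, pa, if_neg (by tauto), if_neg x3, if_neg (by tauto), if_neg x3] at this
  exact this

theorem mem_stellar_max {n : ℕ} {Δ : Finset (Finset (Fin n → ℤ))} {e1 e2 : Fin n → ℤ}
    {s : Finset (Fin n → ℤ)} (hs : s ∈ Δ) (h1 : e1 ∈ s) (h2 : e2 ∈ s) :
    insert (e1 + e2) (s.erase e2) ∈ stellar Δ e1 e2 ∧
    insert (e1 + e2) (s.erase e1) ∈ stellar Δ e1 e2 := by
  simp only [stellar, Finset.mem_union, Finset.mem_filter, Finset.mem_biUnion,
    Finset.mem_powerset, Finset.insert_subset_iff, Finset.singleton_subset_iff]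
  exact ⟨Or.inr ⟨s, ⟨hs, h1, h2⟩, Or.inl (by simp)⟩, Or.inr ⟨s, ⟨hs, h1, h2⟩, Or.inr (by simp)⟩⟩

theorem span_aux {n : ℕ} {e1 e2 : Fin n → ℤ} {s : Finset (Fin n → ℤ)} (hne : e1 ≠ e2)
    (h1 : e1 ∈ s) (h2 : e2 ∈ s) :
    Submodule.span ℤ ((insert (e1 + e2) (s.erase e2) : Finset (Fin n → ℤ)) : Set (Fin n → ℤ)) =
    Submodule.span ℤ (s : Set (Fin n → ℤ)) := by
  apply le_antisymm <;> rw [Submodule.span_le]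
  · intro x hx
    simp only [Finset.coe_insert, Set.mem_insert_iff, Finset.mem_coe, Finset.mem_erase] at hx
    rcases hx with rfl | ⟨_, hx⟩
    · exact Submodule.add_mem _ (Submodule.subset_span h1) (Submodule.subset_span h2)
    · exact Submodule.subset_span hx
  · intro x hx
    by_cases hx2 : x = e2
    · subst hx2
      have a := Submodule.subset_span (R := ℤ) (Finset.mem_coe.2
        (Finset.mem_insert_self (e1 + x) (s.erase x)))
      have b := Submodule.subset_span (R := ℤ) (Finset.mem_coe.2
        (Finset.mem_insert_of_mem (b := e1 + x) (Finset.mem_erase.2 ⟨hne, h1⟩)))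
      have := Submodule.sub_mem _ a b
      rwa [add_sub_cancel_left] at this
    · exact Submodule.subset_span (by simp [hx2]; right; exact hx)

theorem Good.stellar {n : ℕ} {Δ : Finset (Finset (Fin n → ℤ))} (h : Good Δ)
    {e1 e2 : Fin n → ℤ} (hne : e1 ≠ e2) (he : {e1, e2} ∈ Δ) : Good (stellar Δ e1 e2) := by
  have hU := h.stellar_UU hne he
  refine ⟨hU, ?_, ?_⟩
  · intro σ hσ
    have hσ' := hσ
    simp only [_root_.stellar, Finset.mem_union, Finset.mem_filter, Finset.mem_biUnion,
      Finset.mem_powerset, Finset.insert_subset_iff, Finset.singleton_subset_iff] at hσ'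
    rcases hσ' with ⟨a, _⟩ | ⟨s, ⟨hs, h1, h2⟩, hh | hh⟩
    · exact h.2.1 σ a
    · refine Smd.mono (hU.li (mem_stellar_max hs h1 h2).1) ?_ hh
      rw [Smd, span_aux hne h1 h2]
      exact h.2.1 s hs
    · refine Smd.mono (hU.li (mem_stellar_max hs h1 h2).2) ?_ hh
      rw [Smd, add_comm e1 e2, span_aux hne.symm h2 h1]
      exact h.2.1 s hs
  · intro σ hσ τ hτ
    simp only [_root_.stellar, Finset.mem_union, Finset.mem_filter, Finset.mem_biUnion,
      Finset.mem_powerset, Finset.insert_subset_iff, Finset.singleton_subset_iff] at hσ ⊢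
    rcases hσ with ⟨a, b⟩ | ⟨s, hs, hh | hh⟩
    · exact Or.inl ⟨h.2.2 σ a τ hτ, fun hh => b ⟨hτ hh.1, hτ hh.2⟩⟩
    · exact Or.inr ⟨s, hs, Or.inl (hτ.trans hh)⟩
    · exact Or.inr ⟨s, hs, Or.inr (hτ.trans hh)⟩

theorem Good.stellar_sub {n : ℕ} {Δ : Finset (Finset (Fin n → ℤ))} (h : Good Δ)
    {e1 e2 : Fin n → ℤ} (hne : e1 ≠ e2) (he : {e1, e2} ∈ Δ) :
    ∀ s ∈ _root_.stellar Δ e1 e2, ∃ t ∈ Δ, coneOf s ⊆ coneOf t := by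
  intro σ hσ
  obtain ⟨s, hs, H⟩ := h.push hne he hσ
  refine ⟨s, hs, fun v hv => ?_⟩
  obtain ⟨c, c0, cs, hc⟩ := mem_coneOf.1 hv
  exact mem_coneOf.2 ⟨_, (H c c0 cs).1, (H c c0 cs).2, by rw [LL_push, hc]⟩

theorem Good.stellar_sup {n : ℕ} {Δ : Finset (Finset (Fin n → ℤ))} (h : Good Δ)
    {e1 e2 : Fin n → ℤ} (hne : e1 ≠ e2) (he : {e1, e2} ∈ Δ) :
    ∀ s ∈ Δ, ∀ v ∈ coneOf s, ∃ t ∈ _root_.stellar Δ e1 e2, v ∈ coneOf t := by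
  intro s hs v hv
  obtain ⟨n1, n2, hn⟩ := h.new hne he
  by_cases hh : e1 ∈ s ∧ e2 ∈ s
  · obtain ⟨h1, h2⟩ := hh
    obtain ⟨c, c0, cs, hc⟩ := mem_coneOf.1 hv
    have hm := mem_stellar_max hs h1 h2
    have ra := rel_apply hne n1 n2
    have hce : c (e1 + e2) = 0 := cs _ (hn s hs)
    have hL : ∀ m : ℝ, LL n (c - m • (Finsupp.single e1 1 + Finsupp.single e2 1 -
        Finsupp.single (e1 + e2) 1)) = v := by
      intro m
      rw [map_sub, map_smul, LL_rel, smul_zero, sub_zero, hc]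
    rcases le_total (c e1) (c e2) with hle | hle
    · refine ⟨_, hm.2, mem_coneOf.2 ⟨_, ?_, ?_, hL (c e1)⟩⟩
      · intro x
        have := c0 x
        have := c0 e1
        rw [Finsupp.sub_apply, Finsupp.smul_apply, ra, smul_eq_mul]
        split_ifs with x1 x2
        · rcases x1 with rfl | rfl <;> linarith
        · linarith
        · linarith
      · intro x hx
        simp only [Finset.mem_insert, Finset.mem_erase, not_or, not_and] at hx
        obtain ⟨x1, x2⟩ := hx
        rw [Finsupp.sub_apply, Finsupp.smul_apply, ra, smul_eq_mul, if_neg x1]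
        by_cases x3 : x = e1
        · simp [x3]
        · have x4 : x ∉ s := x2 x3
          have x5 : x ≠ e2 := by rintro rfl; exact x4 h2
          simp [x3, x5, cs x x4]
    · refine ⟨_, hm.1, mem_coneOf.2 ⟨_, ?_, ?_, hL (c e2)⟩⟩
      · intro x
        have := c0 x
        have := c0 e2
        rw [Finsupp.sub_apply, Finsupp.smul_apply, ra, smul_eq_mul]
        split_ifs with x1 x2
        · rcases x1 with rfl | rfl <;> linarith
        · linarith
        · linarith
      · intro x hx
        simp only [Finset.mem_insert, Finset.mem_erase, not_or, not_and] at hx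
        obtain ⟨x1, x2⟩ := hx
        rw [Finsupp.sub_apply, Finsupp.smul_apply, ra, smul_eq_mul, if_neg x1]
        by_cases x3 : x = e2
        · simp [x3]
        · have x4 : x ∉ s := x2 x3
          have x5 : x ≠ e1 := by rintro rfl; exact x4 h1
          simp [x3, x5, cs x x4]
  · refine ⟨s, ?_, hv⟩
    rw [h.mem_stellar hne he]
    exact ⟨hh, Or.inl ⟨hn s hs, hs⟩⟩

theorem reach {n : ℕ} {Δ Δ' : Finset (Finset (Fin n → ℤ))} (h : Good Δ)
    (hr : Relation.ReflTransGen StellarStep Δ Δ') : Good Δ' ∧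
      (∀ s ∈ Δ', ∃ t ∈ Δ, coneOf s ⊆ coneOf t) ∧
      (∀ s ∈ Δ, ∀ v ∈ coneOf s, ∃ t ∈ Δ', v ∈ coneOf t) := by
  induction hr with
  | refl => exact ⟨h, fun s hs => ⟨s, hs, subset_rfl⟩, fun s hs v hv => ⟨s, hs, hv⟩⟩
  | tail _ hst ih =>
    obtain ⟨g, i1, i2⟩ := ih
    obtain ⟨e1, e2, hne, he, rfl⟩ := hst
    refine ⟨g.stellar hne he, ?_, ?_⟩
    · intro s hs
      obtain ⟨t, ht, hst⟩ := g.stellar_sub hne he s hs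
      obtain ⟨r, hr, htr⟩ := i1 t ht
      exact ⟨r, hr, hst.trans htr⟩
    · intro s hs v hv
      obtain ⟨t, ht, hvt⟩ := i2 s hs v hv
      exact g.stellar_sup hne he t ht v hvt

open Classical in
theorem one_chi {n : ℕ} (f : (Fin n → ℤ) → ℤ) (hf : ∀ x y, f (x + y) = f x + f y) (m : ℕ) :
    ∀ k : ℕ, ∀ Δ : Finset (Finset (Fin n → ℤ)), Good Δ →
    (∀ x y, {x, y} ∈ Δ → 0 < f x → f y < 0 → f x - f y ≤ m) →
    (Δ.filter (fun s => ∃ x y, s = {x, y} ∧ 0 < f x ∧ f y < 0 ∧ f x - f y = m)).card ≤ k →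
    ∃ Δ', Relation.ReflTransGen StellarStep Δ Δ' ∧
      ∀ x y, {x, y} ∈ Δ' → 0 < f x → f y < 0 → False := by
  induction m with
  | zero =>
    intro k Δ g hb _
    exact ⟨Δ, .refl, fun x y h h1 h2 => by have := hb x y h h1 h2; push_cast at this; omega⟩
  | succ m ihm =>
    intro k
    induction k with
    | zero =>
      intro Δ g hb hk
      rw [Nat.le_zero, Finset.card_eq_zero, Finset.filter_eq_empty_iff] at hk
      refine ihm _ Δ g ?_ le_rfl
      intro x y h h1 h2
      have a := hb x y h h1 h2
      have b : f x - f y ≠ (m + 1 : ℕ) := fun hh => hk h ⟨x, y, rfl, h1, h2, hh⟩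
      push_cast at a b
      omega
    | succ k ihk =>
      intro Δ g hb hk
      by_cases hE : ∃ x y, {x, y} ∈ Δ ∧ 0 < f x ∧ f y < 0 ∧ f x - f y = (m + 1 : ℕ)
      · obtain ⟨x, y, hxy, fx, fy, fxy⟩ := hE
        have hne : x ≠ y := by rintro rfl; omega
        have key : ∀ a b, {a, b} ∈ stellar Δ x y → 0 < f a → f b < 0 →
            (f a - f b < (m + 1 : ℕ)) ∨
            (f a - f b ≤ (m + 1 : ℕ) ∧ {a, b} ∈ Δ) := by
          intro a b hab fa fb
          obtain ⟨hnot, ⟨_, h2⟩ | ⟨h1, h2⟩⟩ := (g.mem_stellar hne hxy).1 hab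
          · exact Or.inr ⟨hb a b h2 fa fb, h2⟩
          · left
            have hab' : a ≠ b := by rintro rfl; omega
            simp only [Finset.mem_insert, Finset.mem_singleton] at h1
            rcases h1 with h1 | h1
            · have : {x, b} ∈ Δ := by
                refine g.2.2 _ h2 _ ?_
                intro z hz
                simp only [Finset.mem_insert, Finset.mem_singleton] at hz
                rcases hz with rfl | rfl
                · simp
                · simp [h1, hab'.symm]
              have := hb x b this fx fb
              have := hf x y
              rw [h1] at this
              omega
            · have : {a, y} ∈ Δ := by
                refine g.2.2 _ h2 _ ?_
                intro z hz
                simp only [Finset.mem_insert, Finset.mem_singleton] at hz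
                rcases hz with rfl | rfl
                · simp [h1, hab']
                · simp
              have := hb a y this fa fy
              have := hf x y
              rw [h1] at this
              omega
        obtain ⟨Δ', hr, hΔ'⟩ := ihk (stellar Δ x y) (g.stellar hne hxy) (by
          intro a b hab fa fb
          rcases key a b hab fa fb with h | h
          · exact h.le
          · exact h.1) (by
          rw [← Nat.lt_succ_iff]
          refine lt_of_lt_of_le (Finset.card_lt_card ?_) hk
          rw [Finset.ssubset_iff_of_subset]
          · refine ⟨{x, y}, Finset.mem_filter.2 ⟨hxy, x, y, rfl, fx, fy, fxy⟩, ?_⟩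
            rw [Finset.mem_filter, g.mem_stellar hne hxy]
            simp
          · intro s hs
            rw [Finset.mem_filter] at hs ⊢
            obtain ⟨hs, a, b, rfl, fa, fb, fab⟩ := hs
            rcases key a b hs fa fb with h | h
            · omega
            · exact ⟨h.2, a, b, rfl, fa, fb, fab⟩)
        exact ⟨Δ', .head ⟨x, y, hne, hxy, rfl⟩ hr, hΔ'⟩
      · refine ihm _ Δ g ?_ le_rfl
        intro x y h h1 h2
        have a := hb x y h h1 h2
        have b : f x - f y ≠ (m + 1 : ℕ) := fun hh => hE ⟨x, y, h, h1, h2, hh⟩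
        push_cast at a b
        omega

theorem bound_ex {n : ℕ} (f : (Fin n → ℤ) → ℤ) (Δ : Finset (Finset (Fin n → ℤ))) :
    ∃ m : ℕ, ∀ x y, {x, y} ∈ Δ → f x - f y ≤ m := by
  classical
  let V := Δ.biUnion id
  refine ⟨∑ x ∈ V, (f x).natAbs + ∑ x ∈ V, (f x).natAbs, ?_⟩
  intro x y h
  have hx : x ∈ V := Finset.mem_biUnion.2 ⟨_, h, by simp⟩
  have hy : y ∈ V := Finset.mem_biUnion.2 ⟨_, h, by simp⟩
  have a := Finset.single_le_sum (f := fun x => (f x).natAbs) (fun _ _ => Nat.zero_le _) hx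
  have b := Finset.single_le_sum (f := fun x => (f x).natAbs) (fun _ _ => Nat.zero_le _) hy
  omega

theorem chi_sum {n : ℕ} (χ : Fin n → ℤ) (s : Finset (Fin n → ℤ)) (c : (Fin n → ℤ) → ℝ) :
    ∑ k, (χ k : ℝ) * (∑ x ∈ s, c x • toR x) k = ∑ x ∈ s, c x * ((∑ k, χ k * x k : ℤ) : ℝ) := by
  simp only [Finset.sum_apply, Pi.smul_apply, smul_eq_mul, toR, Finset.mul_sum]
  rw [Finset.sum_comm]
  apply Finset.sum_congr rfl
  intro x _
  push_cast
  rw [Finset.mul_sum]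
  apply Finset.sum_congr rfl
  intro k _
  ring

theorem all_chi {n : ℕ} (Ξ : Finset (Fin n → ℤ)) :
    ∀ Δ : Finset (Finset (Fin n → ℤ)), Good Δ →
    ∃ Δ', Relation.ReflTransGen StellarStep Δ Δ' ∧ (∀ χ ∈ Ξ, ∀ s ∈ Δ',
        (∀ v ∈ coneOf s, 0 ≤ ∑ k, (χ k : ℝ) * v k) ∨
        (∀ v ∈ coneOf s, ∑ k, (χ k : ℝ) * v k ≤ 0)) := by
  classical
  induction Ξ using Finset.induction_on with
  | empty => intro Δ _; exact ⟨Δ, .refl, by simp⟩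
  | insert χ Ξ _ ih =>
    intro Δ g
    obtain ⟨Δ1, r1, h1⟩ := ih Δ g
    have g1 := (reach g r1).1
    let f : (Fin n → ℤ) → ℤ := fun x => ∑ k, χ k * x k
    obtain ⟨m, hm⟩ := bound_ex f Δ1
    obtain ⟨Δ2, r2, h2⟩ := one_chi f (by
      intro x y; simp only [f, Pi.add_apply, mul_add, Finset.sum_add_distrib]) m _ Δ1 g1
      (fun x y h _ _ => hm x y h) le_rfl
    obtain ⟨g2, sub, -⟩ := reach g1 r2
    refine ⟨Δ2, r1.trans r2, ?_⟩
    intro ψ hψ s hs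
    rcases Finset.mem_insert.1 hψ with rfl | hψ
    · by_cases hp : ∀ x ∈ s, 0 ≤ f x
      · left
        rintro v ⟨c, c0, rfl⟩
        rw [chi_sum]
        exact Finset.sum_nonneg fun x hx => mul_nonneg (c0 x) (by exact_mod_cast hp x hx)
      · right
        push Not at hp
        obtain ⟨y, hy, fy⟩ := hp
        rintro v ⟨c, c0, rfl⟩
        rw [chi_sum]
        refine Finset.sum_nonpos fun x hx => mul_nonpos_of_nonneg_of_nonpos (c0 x) ?_
        have : f x ≤ 0 := by
          by_contra! hh
          refine h2 x y (g2.2.2 s hs _ ?_) hh fy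
          simp [Finset.insert_subset_iff, hx, hy]
        exact_mod_cast this
    · obtain ⟨t, ht, hst⟩ := sub s hs
      exact (h1 ψ hψ t ht).imp (fun h v hv => h v (hst hv)) (fun h v hv => h v (hst hv))

/-- Theorem 4.4: given a smooth fan `Δ` in `ℝ^n` and a finite set `Ξ ⊂ Hom(ℤ^n, ℤ)`, there is
a fan `Δ'` obtained from `Δ` by finitely many elementary stellar subdivisions of two
dimensional cones such that `Δ'` is smooth, subdivides `Δ` (same support, every cone of `Δ'`
inside a cone of `Δ`) and every `χ ∈ Ξ` has property (E) with respect to every cone of `Δ'`: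
on each cone of `Δ'`, `χ` is everywhere nonnegative or everywhere nonpositive. -/
theorem stmt10 {n : ℕ} (Δ : Finset (Finset (Fin n → ℤ))) (hΔ : IsSmoothFan Δ)
    (Ξ : Finset (Fin n → ℤ)) :
    ∃ Δ' : Finset (Finset (Fin n → ℤ)),
      Relation.ReflTransGen StellarStep Δ Δ' ∧
      IsSmoothFan Δ' ∧
      (∀ s ∈ Δ', ∃ t ∈ Δ, coneOf s ⊆ coneOf t) ∧
      ((⋃ s ∈ Δ', coneOf s) = ⋃ s ∈ Δ, coneOf s) ∧
      (∀ χ ∈ Ξ, ∀ s ∈ Δ',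
        (∀ v ∈ coneOf s, 0 ≤ ∑ k, (χ k : ℝ) * v k) ∨
        (∀ v ∈ coneOf s, ∑ k, (χ k : ℝ) * v k ≤ 0)) := by
  obtain ⟨Δ', hr, hE⟩ := all_chi Ξ Δ (good_of_smooth hΔ)
  obtain ⟨g, h1, h2⟩ := reach (good_of_smooth hΔ) hr
  refine ⟨Δ', hr, g.smooth, h1, ?_, hE⟩
  ext v
  simp only [Set.mem_iUnion, exists_prop]
  constructor
  · rintro ⟨s, hs, hv⟩
    obtain ⟨t, ht, hst⟩ := h1 s hs
    exact ⟨t, ht, hst hv⟩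
  · rintro ⟨s, hs, hv⟩
    exact h2 s hs v hv
end

section
/- Let Δ be a smooth fan in ℝ^n with respect to the lattice ℤ^n, let χ ∈ Hom(ℤ^n, ℤ), and suppose Δ^{(2)}_N ≠ ∅. Choose σ = C(e^1, e^2) ∈ Δ^{(2)}_N such that P_Δ(σ) = (M_σ, ε_σ) is maximum with respect to the lexicographic order on ℕ × {0,1}. Then: (1) if ε_σ = 1, the set (_σΔ)^{(2)}_N of bad two-dimensional cones of the elementary stellar subdivision _σΔ equals Δ^{(2)}_N \ {σ}; (2) if ε_σ = 0, then every τ ∈ (_σΔ)^{(2)}_N satisfies P_{_σΔ}(τ) ≤ (M_σ, ε_σ) in the lexicographic order, and the number of cones τ ∈ (_σΔ)^{(2)}_N with P_{_σΔ}(τ) = (M_σ, ε_σ) is strictly smaller than the number of cones σ' ∈ Δ^{(2)}_N with P_Δ(σ') = (M_σ, ε_σ). -/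
/-- The evaluation pairing `⟨χ, η⟩ = ∑ i, χ i * η i` identifying `Hom(ℤ^n, ℤ)` with `ℤ^n`. -/
def dotZ {n : ℕ} (χ η : Fin n → ℤ) : ℤ := ∑ i, χ i * η i

/-- For a two dimensional cone `σ = C(η^1, η^2)` (recorded as the two element set of its
primitive generators), `Mval χ σ = max(|⟨χ, η^1⟩|, |⟨χ, η^2⟩|)`. -/
def Mval {n : ℕ} (χ : Fin n → ℤ) (s : Finset (Fin n → ℤ)) : ℕ :=
  s.sup (fun η => (dotZ χ η).natAbs)

/-- `epsval χ σ = 1` if all generators of `σ` attain the maximal absolute pairing `Mval χ σ`,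
and `0` otherwise. -/
def epsval {n : ℕ} (χ : Fin n → ℤ) (s : Finset (Fin n → ℤ)) : ℕ :=
  if ∀ η ∈ s, (dotZ χ η).natAbs = Mval χ s then 1 else 0

/-- `Pval χ σ = (M_σ, ε_σ)`. -/
def Pval {n : ℕ} (χ : Fin n → ℤ) (s : Finset (Fin n → ℤ)) : ℕ × ℕ :=
  (Mval χ s, epsval χ s)

/-- The lexicographic order on pairs. -/
def lexLe (a b : ℕ × ℕ) : Prop := a.1 < b.1 ∨ (a.1 = b.1 ∧ a.2 ≤ b.2)

/-- A two dimensional cone `σ = C(η^1, η^2)` is bad for `χ` if `χ` does not have property (E)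
with respect to it, i.e. `⟨χ, η^1⟩⟨χ, η^2⟩ < 0`. -/
def badCone {n : ℕ} (χ : Fin n → ℤ) (s : Finset (Fin n → ℤ)) : Prop :=
  s.card = 2 ∧ (∏ η ∈ s, dotZ χ η) < 0

instance {n : ℕ} (χ : Fin n → ℤ) (s : Finset (Fin n → ℤ)) : Decidable (badCone χ s) := by
  unfold badCone; infer_instance

theorem dotZ_add' {n : ℕ} (χ x y : Fin n → ℤ) : dotZ χ (x + y) = dotZ χ x + dotZ χ y := by
  simp [dotZ, mul_add, Finset.sum_add_distrib]

theorem Mval_pair {n : ℕ} (χ x y : Fin n → ℤ) :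
    Mval χ ({x, y} : Finset (Fin n → ℤ)) = max (dotZ χ x).natAbs (dotZ χ y).natAbs := by
  simp [Mval]

theorem epsval_pair {n : ℕ} (χ x y : Fin n → ℤ) :
    epsval χ ({x, y} : Finset (Fin n → ℤ)) =
      if (dotZ χ x).natAbs = (dotZ χ y).natAbs then 1 else 0 := by
  unfold epsval
  rw [Mval_pair]
  congr 1
  simp only [Finset.mem_insert, Finset.mem_singleton, forall_eq_or_imp, forall_eq, eq_iff_iff]
  omega

theorem badCone_pair {n : ℕ} (χ x y : Fin n → ℤ) :
    badCone χ ({x, y} : Finset (Fin n → ℤ)) ↔ dotZ χ x * dotZ χ y < 0 := by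
  unfold badCone
  by_cases h : x = y
  · subst h
    simp only [Finset.pair_eq_singleton, Finset.card_singleton]
    constructor
    · rintro ⟨h, -⟩; omega
    · intro h; nlinarith [mul_self_nonneg (dotZ χ x)]
  · rw [Finset.card_pair h, Finset.prod_pair h]; simp

theorem mem_stellar_bad {n : ℕ} {Δ : Finset (Finset (Fin n → ℤ))} (hΔ : IsSmoothFan Δ)
    {χ e1 e2 : Fin n → ℤ} (hne : e1 ≠ e2) {τ : Finset (Fin n → ℤ)}
    (hτ : τ ∈ stellar Δ e1 e2) (hc : τ.card = 2) :
    (τ ∈ Δ ∧ τ ≠ {e1, e2}) ∨ ∃ w, τ = {e1 + e2, w} ∧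
      ({e1, w} : Finset (Fin n → ℤ)) ∈ Δ ∧ ({e2, w} : Finset (Fin n → ℤ)) ∈ Δ := by
  have hface := hΔ.2.2.1
  have key : ∀ s ∈ Δ, e1 ∈ s → e2 ∈ s → ∀ t ⊆ s, ¬ (e1 ∈ t ∧ e2 ∈ t) →
      τ ⊆ insert (e1 + e2) t → (τ ∈ Δ ∧ τ ≠ {e1, e2}) ∨ ∃ w, τ = {e1 + e2, w} ∧
      ({e1, w} : Finset (Fin n → ℤ)) ∈ Δ ∧ ({e2, w} : Finset (Fin n → ℤ)) ∈ Δ := by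
    intro s hs h1 h2 t hts hnt hsub
    by_cases hm : e1 + e2 ∈ τ
    · right
      obtain ⟨w, hw⟩ := Finset.card_eq_one.mp
        (show (τ.erase (e1 + e2)).card = 1 by rw [Finset.card_erase_of_mem hm, hc])
      have hτe : τ = {e1 + e2, w} := by rw [← hw, Finset.insert_erase hm]
      have hwm : w ∈ τ.erase (e1 + e2) := by rw [hw]; simp
      rw [Finset.mem_erase] at hwm
      have hws : w ∈ s := hts ((Finset.mem_insert.mp (hsub hwm.2)).resolve_left hwm.1)
      refine ⟨w, hτe, hface s hs _ ?_, hface s hs _ ?_⟩ <;>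
      · intro x hx
        simp only [Finset.mem_insert, Finset.mem_singleton] at hx
        rcases hx with rfl | rfl <;> assumption
    · left
      have hsub' : τ ⊆ t := (Finset.subset_insert_iff_of_notMem hm).mp hsub
      refine ⟨hface s hs _ (hsub'.trans hts), ?_⟩
      rintro rfl
      exact hnt ⟨hsub' (by simp), hsub' (by simp)⟩
  unfold stellar at hτ
  simp only [Finset.mem_union, Finset.mem_filter, Finset.mem_biUnion, Finset.mem_powerset] at hτ
  rcases hτ with ⟨h, h'⟩ | ⟨s, ⟨hs, hss⟩, h | h⟩
  · left
    refine ⟨h, ?_⟩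
    rintro rfl
    exact h' subset_rfl
  · exact key s hs (hss (by simp)) (hss (by simp)) _ (Finset.erase_subset _ _) (by simp) h
  · exact key s hs (hss (by simp)) (hss (by simp)) _ (Finset.erase_subset _ _) (by simp) h

/-- Lemma 4.3: let `σ = C(e^1, e^2)` be a bad two dimensional cone of the smooth fan `Δ` with
`P_Δ(σ)` lexicographically maximal among bad two dimensional cones. If `ε_σ = 1`, the bad two
dimensional cones of `_σΔ` are exactly those of `Δ` with `σ` removed. If `ε_σ = 0`, every bad
two dimensional cone of `_σΔ` has `P`-value lexicographically at most `(M_σ, ε_σ)`, and the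
number of bad cones attaining `(M_σ, ε_σ)` strictly decreases. -/
theorem stmt13 {n : ℕ} (Δ : Finset (Finset (Fin n → ℤ))) (hΔ : IsSmoothFan Δ)
    (χ e1 e2 : Fin n → ℤ) (hne : e1 ≠ e2)
    (hσ : ({e1, e2} : Finset (Fin n → ℤ)) ∈ Δ)
    (hbad : badCone χ ({e1, e2} : Finset (Fin n → ℤ)))
    (hmax : ∀ τ ∈ Δ, badCone χ τ →
      lexLe (Pval χ τ) (Pval χ ({e1, e2} : Finset (Fin n → ℤ)))) :
    (epsval χ ({e1, e2} : Finset (Fin n → ℤ)) = 1 →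
      (stellar Δ e1 e2).filter (fun s => badCone χ s) =
        (Δ.filter (fun s => badCone χ s)).erase ({e1, e2} : Finset (Fin n → ℤ))) ∧
    (epsval χ ({e1, e2} : Finset (Fin n → ℤ)) = 0 →
      (∀ τ ∈ stellar Δ e1 e2, badCone χ τ →
        lexLe (Pval χ τ) (Pval χ ({e1, e2} : Finset (Fin n → ℤ)))) ∧
      ((stellar Δ e1 e2).filter (fun s => badCone χ s ∧
          Pval χ s = Pval χ ({e1, e2} : Finset (Fin n → ℤ)))).card <
        (Δ.filter (fun s => badCone χ s ∧
          Pval χ s = Pval χ ({e1, e2} : Finset (Fin n → ℤ)))).card) := by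
  have hab := (badCone_pair χ e1 e2).mp hbad
  constructor
  · intro heps
    rw [epsval_pair] at heps
    have hc : dotZ χ (e1 + e2) = 0 := by
      rw [dotZ_add']
      split_ifs at heps with h
      rcases Int.natAbs_eq_natAbs_iff.mp h with h | h
      · rw [h] at hab; nlinarith [mul_self_nonneg (dotZ χ e2)]
      · omega
    ext τ
    simp only [Finset.mem_filter, Finset.mem_erase]
    constructor
    · rintro ⟨hτ, hb⟩
      rcases mem_stellar_bad (χ := χ) hΔ hne hτ hb.1 with ⟨h1, h2⟩ | ⟨w, rfl, -, -⟩
      · exact ⟨h2, h1, hb⟩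
      · rw [badCone_pair, hc] at hb; simp at hb
    · rintro ⟨h2, h1, hb⟩
      refine ⟨?_, hb⟩
      unfold stellar
      refine Finset.mem_union_left _ (Finset.mem_filter.mpr ⟨h1, fun hs => h2 ?_⟩)
      exact (Finset.eq_of_subset_of_card_le hs (by rw [hb.1, hbad.1])).symm
  · intro heps
    have hnew : ∀ w, badCone χ ({e1 + e2, w} : Finset (Fin n → ℤ)) →
        ({e1, w} : Finset (Fin n → ℤ)) ∈ Δ → ({e2, w} : Finset (Fin n → ℤ)) ∈ Δ →
        Mval χ ({e1 + e2, w} : Finset (Fin n → ℤ)) < Mval χ ({e1, e2} : Finset (Fin n → ℤ)) := by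
      intro w hb m1 m2
      have q1 := hmax _ m1
      have q2 := hmax _ m2
      simp only [lexLe, Pval, heps] at q1 q2
      rw [epsval_pair] at heps q1 q2
      rw [badCone_pair] at hb q1 q2
      simp only [Mval_pair] at *
      rw [dotZ_add'] at *
      generalize dotZ χ e1 = a at *
      generalize dotZ χ e2 = b at *
      generalize dotZ χ w = c at *
      rw [mul_neg_iff] at *
      split_ifs at * <;> omega
    have hold : ∀ τ ∈ stellar Δ e1 e2, badCone χ τ → (τ ∈ Δ ∧ τ ≠ {e1, e2}) ∨
        Mval χ τ < Mval χ ({e1, e2} : Finset (Fin n → ℤ)) := by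
      intro τ hτ hb
      rcases mem_stellar_bad (χ := χ) hΔ hne hτ hb.1 with h | ⟨w, rfl, m1, m2⟩
      · exact Or.inl h
      · exact Or.inr (hnew w hb m1 m2)
    constructor
    · intro τ hτ hb
      rcases hold τ hτ hb with h | h
      · exact hmax τ h.1 hb
      · exact Or.inl h
    · apply Finset.card_lt_card
      rw [Finset.ssubset_iff_of_subset]
      · refine ⟨{e1, e2}, Finset.mem_filter.mpr ⟨hσ, hbad, rfl⟩, ?_⟩
        intro h
        rcases hold _ (Finset.mem_filter.mp h).1 hbad with h | h
        · exact h.2 rfl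
        · exact lt_irrefl _ h
      · intro τ h
        obtain ⟨hτ, hb, hP⟩ := Finset.mem_filter.mp h
        rcases hold τ hτ hb with h | h
        · exact Finset.mem_filter.mpr ⟨h.1, hb, hP⟩
        · exact absurd (congrArg Prod.fst hP) (ne_of_lt h)
end

section
/- Let Δ be a complete smooth fan in ℝ^n with respect to the lattice ℤ^n (i.e. the union of the cones of Δ is all of ℝ^n), let Γ be a subgroup of Hom(ℤ^n, ℤ), and suppose the subspace U = Γ ⊗ ℝ ⊆ Hom(ℝ^n, ℝ) has property (E) with respect to every cone of Δ. Then the subspace U^⊥ = {v ∈ ℝ^n : ⟨u, v⟩ = 0 for all u ∈ U} is equal to the union of those cones of Δ that are contained in U^⊥. -/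
/-- Remark 3.9(1): if `Δ` is a complete smooth fan and the real span `U` of a subgroup `Γ` of
`Hom(ℤ^n, ℤ)` has property (E) with respect to every cone of `Δ`, then the subspace `U^⊥` is
the union of the cones of `Δ` that it contains. -/
theorem stmt14 {n : ℕ} (Δ : Finset (Finset (Fin n → ℤ))) (hΔ : IsSmoothFan Δ)
    (hcomplete : ∀ v : Fin n → ℝ, ∃ s ∈ Δ, v ∈ coneOf s)
    (Γ : Submodule ℤ (Fin n → ℤ))
    (U : Submodule ℝ (Fin n → ℝ))
    (hU : U = Submodule.span ℝ (toR '' (Γ : Set (Fin n → ℤ))))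
    (hE : ∀ s ∈ Δ, SubspacePropE U s) :
    let perp : Set (Fin n → ℝ) := {v | ∀ u ∈ U, ∑ k, u k * v k = 0}
    perp = ⋃ s ∈ {s : Finset (Fin n → ℤ) | s ∈ Δ ∧ coneOf s ⊆ perp}, coneOf s := by
  intro perp
  have hpair : ∀ (t : Finset (Fin n → ℤ)) (c : (Fin n → ℤ) → ℝ) (w : Fin n → ℝ),
      ∑ k, w k * (∑ x ∈ t, c x • toR x) k = ∑ x ∈ t, c x * ∑ k, w k * (x k : ℝ) := by
    intro t c w
    simp only [Finset.sum_apply, Pi.smul_apply, smul_eq_mul, toR, Finset.mul_sum]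
    rw [Finset.sum_comm]
    refine Finset.sum_congr rfl fun x _ => Finset.sum_congr rfl fun k _ => ?_
    ring
  ext v
  simp only [Set.mem_iUnion, Set.mem_setOf_eq, exists_prop]
  constructor
  · intro hv
    obtain ⟨s, hs, c, hc, hvc⟩ := hcomplete v
    obtain ⟨r, u, -, hspan, hpos⟩ := hE s hs
    classical
    have hzero : ∀ i, ∀ x ∈ s, c x ≠ 0 → ∑ k, u i k * (x k : ℝ) = 0 := by
      intro i x hx hcx
      have h0 : ∑ k, u i k * v k = 0 :=
        hv (u i) (hspan ▸ Submodule.subset_span (Set.mem_range_self i))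
      rw [hvc, hpair, Finset.sum_eq_zero_iff_of_nonneg
        (fun y hy => mul_nonneg (hc y) (hpos i y hy))] at h0
      exact (mul_eq_zero.mp (h0 x hx)).resolve_left hcx
    refine ⟨s.filter (fun x => c x ≠ 0),
      ⟨hΔ.2.2.1 s hs _ (Finset.filter_subset _ _), ?_⟩, c, hc, ?_⟩
    · rintro _ ⟨d, -, rfl⟩ w hw
      rw [hpair]
      refine Finset.sum_eq_zero fun x hx => ?_
      rw [Finset.mem_filter] at hx
      have : ∑ k, w k * (x k : ℝ) = 0 := by
        rw [← hspan] at hw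
        induction hw using Submodule.span_induction with
        | mem y hy =>
          obtain ⟨i, rfl⟩ := hy
          exact hzero i x hx.1 hx.2
        | zero => simp
        | add a b _ _ ha hb => simp [add_mul, Finset.sum_add_distrib, ha, hb]
        | smul a b _ hb => simp [mul_assoc, ← Finset.mul_sum, hb]
      rw [this, mul_zero]
    · rw [hvc, Finset.sum_filter]
      refine Finset.sum_congr rfl fun x _ => ?_
      by_cases h : c x = 0 <;> simp [h]
  · rintro ⟨s, ⟨-, hs⟩, hv⟩
    exact hs hv
end
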